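/- Let C be a nonempty bounded closed convex subset of a real Hilbert space H and T a metrically nonspreading mapping of C into itself (with the metric induced by the norm). Then T has a fixed point. -/

import Mathlib

/-!
The squared asymptotic radius `φ y = limsup dist (Tⁿ x) y ^ 2` of a bounded orbit inherits strong
midpoint convexity from the semi-parallelogram law, so in a Hadamard space it has a unique
minimizer. Taking the limsup of the nonspreading inequality along the orbit gives
`2 φ (T y) ≤ φ y + φ (T y)`, that is, `φ (T y) ≤ φ y`; hence `T` fixes the minimizer.
-/

open Filter Topology Set Bornology

/-- The metrically nonspreading self-maps of a metric space. -/
def MetricallyNonspreading {X : Type*} [PseudoMetricSpace X] (T : X → X) : Prop :=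
  ∀ x y, 2 * dist (T x) (T y) ^ 2 ≤ dist (T x) y ^ 2 + dist (T y) x ^ 2

/-- Hadamard spaces (complete CAT(0) spaces), encoded by completeness and the semi-parallelogram
law of Bruhat and Tits, which avoids geodesics and comparison triangles. -/
class HadamardSpace (X : Type*) [MetricSpace X] : Prop extends CompleteSpace X where
  exists_semiparallelogram : ∀ y w : X, ∃ m : X, ∀ z : X,
    dist z m ^ 2 ≤ (dist z y ^ 2 + dist z w ^ 2) / 2 - 1 / 4 * dist y w ^ 2

theorem hadamardSpace_of_convex {E : Type*} [NormedAddCommGroup E] [InnerProductSpace ℝ E]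
    {C : Set E} (hC : IsComplete C) (hCv : Convex ℝ C) : HadamardSpace C where
  toCompleteSpace := hC.completeSpace_coe
  exists_semiparallelogram y w := by
    refine ⟨⟨midpoint ℝ (y : E) w, hCv.midpoint_mem y.2 w.2⟩, fun z => ?_⟩
    have apollonius :=
      EuclideanGeometry.dist_sq_add_dist_sq_eq_two_mul_dist_midpoint_sq_add_half_dist_sq (z : E) y w
    simp only [Subtype.dist_eq]
    linarith

/-- Strong midpoint convexity with modulus `c`. As `X` has no chosen midpoints, any point `m`
satisfying the convexity inequality is allowed to play that role. -/
def StronglyMidpointConvex {X : Type*} [PseudoMetricSpace X] (c : ℝ) (f : X → ℝ) : Prop :=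
  ∀ y w, ∃ m, f m ≤ (f y + f w) / 2 - c * dist y w ^ 2

namespace StronglyMidpointConvex

variable {X : Type*} {c : ℝ} {f : X → ℝ}

theorem mul_dist_sq_le [PseudoMetricSpace X] (hf : StronglyMidpointConvex c f) {r : ℝ}
    (hr : ∀ x, r ≤ f x) (y w : X) : c * dist y w ^ 2 ≤ (f y + f w) / 2 - r := by
  obtain ⟨m, hm⟩ := hf y w
  linarith [hr m]

theorem cauchy_comap_nhds_iInf [PseudoMetricSpace X] [Nonempty X]
    (hf : StronglyMidpointConvex c f) (hc : 0 < c) (hb : BddBelow (range f)) :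
    Cauchy (comap f (𝓝 (⨅ x, f x))) := by
  have hmem : ⨅ x, f x ∈ closure (range f) := csInf_mem_closure (range_nonempty f) hb
  refine Metric.cauchy_iff.2
    ⟨comap_neBot_iff_frequently.2 (mem_closure_iff_frequently.1 hmem), fun ε hε => ?_⟩
  have hlt : ⨅ x, f x < (⨅ x, f x) + c * ε ^ 2 := lt_add_of_pos_right _ (by positivity)
  refine ⟨_, preimage_mem_comap (Iio_mem_nhds hlt), fun y (hy : f y < _) w (hw : f w < _) => ?_⟩
  have hdist : c * dist y w ^ 2 < c * ε ^ 2 := by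
    linarith [hf.mul_dist_sq_le (ciInf_le hb) y w]
  exact lt_of_pow_lt_pow_left₀ 2 hε.le (lt_of_mul_lt_mul_left hdist hc.le)

theorem exists_forall_le [PseudoMetricSpace X] [CompleteSpace X] [Nonempty X]
    (hf : StronglyMidpointConvex c f) (hc : 0 < c) (hlsc : LowerSemicontinuous f)
    (hb : BddBelow (range f)) : ∃ p, ∀ x, f p ≤ f x := by
  have hcauchy := hf.cauchy_comap_nhds_iInf hc hb
  obtain ⟨p, hp⟩ := CompleteSpace.complete hcauchy
  have := hcauchy.1
  have hp_le : f p ≤ ⨅ x, f x := le_of_forall_lt_imp_le_of_dense fun a ha =>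
    ge_of_tendsto tendsto_comap <| hp <| (hlsc p a ha).mono fun _ => le_of_lt
  exact ⟨p, fun x => hp_le.trans (ciInf_le hb x)⟩

theorem eq_of_le [MetricSpace X] (hf : StronglyMidpointConvex c f) (hc : 0 < c) {p q : X}
    (hp : ∀ x, f p ≤ f x) (hq : f q ≤ f p) : q = p := by
  have hdist : c * dist q p ^ 2 ≤ 0 := by linarith [hf.mul_dist_sq_le hp q p]
  exact dist_eq_zero.1 (pow_eq_zero_iff two_ne_zero |>.1
    (le_antisymm (nonpos_of_mul_nonpos_right hdist hc) (sq_nonneg _)))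

end StronglyMidpointConvex

/-- The square of the asymptotic radius about `y` of a filter `l` on `X`; for `l` the image of
`atTop` under a sequence this is the usual notion. Meaningful when `l` is nontrivial and contains a
bounded set; otherwise the real `limsup` may be a junk value. -/
noncomputable def asymptoticRadiusSq {X : Type*} [PseudoMetricSpace X] (l : Filter X) (y : X) : ℝ :=
  limsup (fun z => dist z y ^ 2) l

section AsymptoticRadius

variable {X : Type*} [PseudoMetricSpace X] {l : Filter X} {s : Set X}

theorem asymptoticRadiusSq_le [NeBot l] {y : X} {a : ℝ} (h : ∀ᶠ z in l, dist z y ^ 2 ≤ a) :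
    asymptoticRadiusSq l y ≤ a :=
  limsup_le_of_le (isCoboundedUnder_le_of_le l fun _ => sq_nonneg _) h

theorem eventually_dist_sq_lt_add (hs : IsBounded s) (hsl : s ∈ l) (y : X)
    {ε : ℝ} (hε : 0 < ε) : ∀ᶠ z in l, dist z y ^ 2 < asymptoticRadiusSq l y + ε := by
  obtain ⟨M, hM⟩ := (Metric.isBounded_iff_subset_closedBall y).1 hs
  have hle : ∀ᶠ z in l, dist z y ^ 2 ≤ M ^ 2 :=
    mem_of_superset hsl fun z hz => pow_le_pow_left₀ dist_nonneg (hM hz) 2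
  exact eventually_lt_of_limsup_lt (lt_add_of_pos_right _ hε) (isBoundedUnder_of_eventually_le hle)

theorem asymptoticRadiusSq_nonneg [NeBot l] (y : X) : 0 ≤ asymptoticRadiusSq l y := by
  rw [asymptoticRadiusSq, limsup_eq]
  refine Real.sInf_nonneg fun a ha => ?_
  obtain ⟨z, hz⟩ := Eventually.exists ha
  exact (sq_nonneg _).trans hz

theorem lowerSemicontinuous_asymptoticRadiusSq [NeBot l] (hs : IsBounded s) (hsl : s ∈ l) :
    LowerSemicontinuous (asymptoticRadiusSq l) := by
  intro p a ha
  obtain ⟨M, hM⟩ := (Metric.isBounded_iff_subset_closedBall p).1 hs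
  have lower_bound (q : X) :
      asymptoticRadiusSq l p - dist q p * (2 * M + dist q p) ≤ asymptoticRadiusSq l q := by
    rw [sub_le_iff_le_add]
    refine le_of_forall_pos_le_add fun ε hε => asymptoticRadiusSq_le ?_
    filter_upwards [hsl, eventually_dist_sq_lt_add hs hsl q hε] with z hzs hzq
    have hzM : dist z p ≤ M := hM hzs
    have hzp_le : dist z p ≤ dist z q + dist q p := dist_triangle z q p
    have hzq_le : dist z q ≤ dist z p + dist q p := dist_triangle_right z q p
    have hdiff : dist z p ^ 2 - dist z q ^ 2 ≤ dist q p * (2 * M + dist q p) := calc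
      dist z p ^ 2 - dist z q ^ 2 = (dist z p - dist z q) * (dist z p + dist z q) := by ring
      _ ≤ dist q p * (2 * M + dist q p) :=
        mul_le_mul (by linarith) (by linarith) (by positivity) dist_nonneg
    linarith
  have hcont : Continuous fun q => asymptoticRadiusSq l p - dist q p * (2 * M + dist q p) := by
    fun_prop
  filter_upwards [hcont.continuousAt.eventually_const_lt (by simpa using ha)] with q hq
  exact hq.trans_le (lower_bound q)

theorem MetricallyNonspreading.asymptoticRadiusSq_apply_le [NeBot l] {T : X → X}
    (hT : MetricallyNonspreading T) (hs : IsBounded s) (hsl : s ∈ l) (hTl : map T l = l) (y : X) :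
    asymptoticRadiusSq l (T y) ≤ asymptoticRadiusSq l y := by
  suffices h : ∀ ε > 0, asymptoticRadiusSq l (T y) ≤
      (asymptoticRadiusSq l y + asymptoticRadiusSq l (T y)) / 2 + ε by
    linarith [le_of_forall_pos_le_add h]
  intro ε hε
  refine asymptoticRadiusSq_le ?_
  suffices h : ∀ᶠ z in l, dist (T z) (T y) ^ 2 ≤
      (asymptoticRadiusSq l y + asymptoticRadiusSq l (T y)) / 2 + ε from hTl.ge h
  have hTtendsto : Tendsto T l l := hTl.le
  filter_upwards [hTtendsto.eventually (eventually_dist_sq_lt_add hs hsl y hε),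
    eventually_dist_sq_lt_add hs hsl (T y) hε] with z hzy hzTy
  have hz := hT z y
  rw [dist_comm (T y) z] at hz
  linarith

end AsymptoticRadius

theorem stronglyMidpointConvex_asymptoticRadiusSq {X : Type*} [MetricSpace X] [HadamardSpace X]
    {l : Filter X} [NeBot l] {s : Set X} (hs : IsBounded s) (hsl : s ∈ l) :
    StronglyMidpointConvex (1 / 4) (asymptoticRadiusSq l) := by
  intro y w
  obtain ⟨m, hm⟩ := HadamardSpace.exists_semiparallelogram y w
  refine ⟨m, le_of_forall_pos_le_add fun ε hε => asymptoticRadiusSq_le ?_⟩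
  filter_upwards [eventually_dist_sq_lt_add hs hsl y hε,
    eventually_dist_sq_lt_add hs hsl w hε] with z hzy hzw
  linarith [hm z]

theorem map_map_iterate_atTop {X : Type*} (T : X → X) (x : X) :
    map T (map (fun n => T^[n] x) atTop) = map (fun n => T^[n] x) atTop := by
  conv_rhs => rw [← map_add_atTop_eq_nat 1]
  simp only [map_map, Function.comp_def, Function.iterate_succ_apply']

theorem stmt_7_general {X : Type*} [MetricSpace X] [HadamardSpace X] {T : X → X}
    (hT : MetricallyNonspreading T) {x : X} (hx : IsBounded (range fun n => T^[n] x)) :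
    ∃ u, T u = u := by
  have : Nonempty X := ⟨x⟩
  let l : Filter X := map (fun n => T^[n] x) atTop
  have hl : range (fun n => T^[n] x) ∈ l := range_mem_map
  have hconv := stronglyMidpointConvex_asymptoticRadiusSq hx hl
  obtain ⟨p, hp⟩ := hconv.exists_forall_le (by norm_num)
    (lowerSemicontinuous_asymptoticRadiusSq hx hl)
    ⟨0, forall_mem_range.2 asymptoticRadiusSq_nonneg⟩
  exact ⟨p, hconv.eq_of_le (by norm_num) hp
    (hT.asymptoticRadiusSq_apply_le hx hl (map_map_iterate_atTop T x) p)⟩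

/-- Every metrically nonspreading self-mapping of a nonempty bounded closed convex
subset of a real Hilbert space has a fixed point. -/
theorem stmt_7 {H : Type*} [NormedAddCommGroup H] [InnerProductSpace ℝ H]
    [CompleteSpace H] (C : Set H) (hC : C.Nonempty) (hCb : Bornology.IsBounded C)
    (hCc : IsClosed C) (hCv : Convex ℝ C) (T : C → C)
    (hT : ∀ x y : C, 2 * dist (T x) (T y) ^ 2 ≤ dist (T x) y ^ 2 + dist (T y) x ^ 2) :
    ∃ u : C, T u = u :=
  have := hadamardSpace_of_convex hCc.isComplete hCv
  stmt_7_general hT (x := ⟨_, hC.some_mem⟩)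
    (isBounded_image_subtype_val.1 (hCb.subset (Subtype.coe_image_subset C _)))
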